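/- There exist constants c1, c2 > 0 such that for all sufficiently large even N the following holds. Let g ∈ G[X] be the Raz–Yehudayoff polynomial on X = {x_1,…,x_N}. Suppose g = f_1 + ⋯ + f_m where, for each i, f_i is computed by an r-pass syntactically multilinear ABP of width s_i ≥ 2 over G, and let s = max{s_1,…,s_m}. Then m ≥ 2^{c1·N^{1/5}} / s^{c2·(r + log N)}. -/

import Mathlib

open MvPolynomial

noncomputable section

/-- A multilinear polynomial: every exponent is at most 1. -/
def MLin {σ : Type*} {K : Type*} [CommSemiring K] (f : MvPolynomial σ K) : Prop :=
  ∀ d ∈ f.support, ∀ i, d i ≤ 1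

/-- The partial derivative matrix of a multilinear polynomial over Y ∪ Z
(Y = `inl`-variables, Z = `inr`-variables), rows and columns indexed by subsets. -/
def pdm {h : ℕ} {K : Type*} [CommSemiring K] (f : MvPolynomial (Fin h ⊕ Fin h) K) :
    Matrix (Finset (Fin h)) (Finset (Fin h)) K := fun S T =>
  f.coeff ((∑ i ∈ S, Finsupp.single (Sum.inl i) 1) + ∑ j ∈ T, Finsupp.single (Sum.inr j) 1)

/-- The field G = F(W), the field of rational functions over F in variables
`w_{i,k,j}`, `i,k,j ∈ ℕ`. -/
abbrev Gf (F : Type*) [Field F] : Type _ := FractionRing (MvPolynomial (ℕ × ℕ × ℕ) F)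

/-- The element w_{i,k,j} of G. -/
def wv (F : Type*) [Field F] (i k j : ℕ) : Gf F :=
  algebraMap (MvPolynomial (ℕ × ℕ × ℕ) F) (Gf F) (MvPolynomial.X (i, k, j))

/-- The Raz–Yehudayoff polynomials `g_{i,j}` (first argument is fuel; every
recursive call reduces `j - i` by at least 2, so fuel `N` suffices for `g_{1,N}`). -/
def RY (F : Type*) [Field F] : ℕ → ℕ → ℕ → MvPolynomial ℕ (Gf F)
  | 0, _, _ => 1
  | fuel + 1, i, j =>
      if j < i then 1
      else (1 + X i * X j) * RY F fuel (i + 1) (j - 1)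
        + ∑ k ∈ (Finset.Icc (i + 1) (j - 2)).filter (fun k => (k - i) % 2 = 1),
            C (wv F i k j) * RY F fuel i k * RY F fuel (k + 1) j

/-- The Raz–Yehudayoff polynomial `g = g_{1,N}`, in the variables `x_1, …, x_N`. -/
def razPoly (F : Type*) [Field F] (N : ℕ) : MvPolynomial ℕ (Gf F) := RY F N 1 N

/-- `|φ(S) ∩ Y|` for a partition function φ. -/
def yCount {h : ℕ} (φ : ℕ → Fin h ⊕ Fin h) (S : Finset ℕ) : ℕ :=
  (S.filter fun x => (φ x).isLeft = true).card

/-- `|φ(S) ∩ Z|` for a partition function φ. -/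
def zCount {h : ℕ} (φ : ℕ → Fin h ⊕ Fin h) (S : Finset ℕ) : ℕ :=
  (S.filter fun x => (φ x).isRight = true).card

/-- `S` is `k`-unbalanced with respect to the partition φ. -/
def kUnb {h : ℕ} (φ : ℕ → Fin h ⊕ Fin h) (k : ℕ) (S : Finset ℕ) : Prop :=
  (k : ℤ) ≤ |(yCount φ S : ℤ) - (zCount φ S : ℤ)|

/-- Extension of a partition given on `X` to all of ℕ (junk value elsewhere). -/
def extPart {h : ℕ} (hh : 0 < h) (X : Finset ℕ) (e : {x // x ∈ X} → Fin h ⊕ Fin h) :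
    ℕ → Fin h ⊕ Fin h := fun x =>
  if hx : x ∈ X then e ⟨x, hx⟩ else Sum.inl ⟨0, hh⟩

/-- Probability of an event under the uniform distribution on a finite type. -/
def unifProb {Ω : Type*} [Fintype Ω] (p : Ω → Prop) : ℝ :=
  haveI := Classical.decPred p
  ((Finset.univ.filter p).card : ℝ) / (Fintype.card Ω : ℝ)

/-- The (1,1) entry of the product `M 0 * M 1 * ⋯ * M (n-1)`. -/
def mprodVal {K : Type*} [CommSemiring K] {n w : ℕ} (hw : 0 < w)
    (M : Fin n → Matrix (Fin w) (Fin w) (MvPolynomial ℕ K)) : MvPolynomial ℕ K :=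
  (List.ofFn M).prod ⟨0, hw⟩ ⟨0, hw⟩

/-- An oblivious read-once ABP of width `w` in variables `x_1, …, x_N` with
variable order π (a permutation of `{1, …, N}`): the ℓ-th layer matrix has
entries of degree at most 1 in the single variable `x_{π(ℓ)}`. -/
def IsROABP {K : Type*} [CommSemiring K] (N w : ℕ) (π : ℕ → ℕ)
    (M : Fin N → Matrix (Fin w) (Fin w) (MvPolynomial ℕ K)) : Prop :=
  Set.BijOn π (Set.Icc 1 N) (Set.Icc 1 N) ∧
    ∀ ℓ : Fin N, ∀ i j, ∃ a b : K, M ℓ i j = C a + C b * X (π (ℓ.val + 1))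

/-- An `r`-pass syntactically multilinear ABP of width `w`. -/
def IsRPass {K : Type*} [CommSemiring K] (N w r : ℕ) (π : Fin r → ℕ → ℕ)
    (M : Fin (r * N) → Matrix (Fin w) (Fin w) (MvPolynomial ℕ K)) : Prop :=
  (∀ j, Set.BijOn (π j) (Set.Icc 1 N) (Set.Icc 1 N)) ∧
  (∀ ℓ : Fin (r * N), ∀ i j, ∃ a b : K,
      M ℓ i j = C a + C b *
        X (π ⟨ℓ.val / N, Nat.div_lt_of_lt_mul (by rw [Nat.mul_comm N r]; exact ℓ.2)⟩
            (ℓ.val % N + 1))) ∧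
  (∀ (idx : Fin (r * N + 1) → Fin w) (v : ℕ) (ℓ₁ ℓ₂ : Fin (r * N)),
      v ∈ (M ℓ₁ (idx ℓ₁.castSucc) (idx ℓ₁.succ)).vars →
      v ∈ (M ℓ₂ (idx ℓ₂.castSucc) (idx ℓ₂.succ)).vars → ℓ₁ = ℓ₂)

/-- An α-sparse ROABP with variable blocks `Xs 0, …, Xs (d-1)`, width `w` and
sparsity `t`: every entry of the `i`-th matrix is a multilinear polynomial in the
variables `Xs i` with at most `t` monomials. -/
def IsSparseROABP {K : Type*} [CommSemiring K] {d : ℕ} (w t : ℕ)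
    (Xs : Fin d → Finset ℕ) (M : Fin d → Matrix (Fin w) (Fin w) (MvPolynomial ℕ K)) : Prop :=
  ∀ ℓ i j, MLin (M ℓ i j) ∧ (M ℓ i j).vars ⊆ Xs ℓ ∧ (M ℓ i j).support.card ≤ t


/-! ### Part 1: nonsingularity of row families -/

/-- Rows of the communication matrix of `h` are linearly independent. -/
def NS {K : Type*} [Field K] (U V : Finset ℕ) (h : Finset ℕ → K) : Prop :=
  ∀ c : Finset ℕ → K, (∀ z ⊆ V, ∑ y ∈ U.powerset, c y * h (y ∪ z) = 0) → ∀ y ⊆ U, c y = 0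

lemma sum_powerset_union {K : Type*} [AddCommMonoid K] {U₁ U₂ : Finset ℕ} (hd : Disjoint U₁ U₂)
    (f : Finset ℕ → K) :
    ∑ y ∈ (U₁ ∪ U₂).powerset, f y = ∑ y₁ ∈ U₁.powerset, ∑ y₂ ∈ U₂.powerset, f (y₁ ∪ y₂) := by
  rw [← Finset.sum_product']
  symm
  refine Finset.sum_bij' (fun p _ => p.1 ∪ p.2) (fun y _ => (y ∩ U₁, y ∩ U₂)) ?_ ?_ ?_ ?_ ?_
  · rintro ⟨a, b⟩ h
    simp only [Finset.mem_product, Finset.mem_powerset] at h ⊢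
    exact Finset.union_subset_union h.1 h.2
  · intro y h
    simp only [Finset.mem_product, Finset.mem_powerset] at h ⊢
    exact ⟨Finset.inter_subset_right, Finset.inter_subset_right⟩
  · rintro ⟨a, b⟩ h
    simp only [Finset.mem_product, Finset.mem_powerset] at h
    rw [Finset.disjoint_left] at hd
    ext x <;> simp only [Finset.mem_inter, Finset.mem_union]
    · have := @h.1 x; have := @h.2 x; have := @hd x; tauto
    · have := @h.1 x; have := @h.2 x; have := @hd x; tauto
  · intro y h
    simp only [Finset.mem_powerset] at h
    rw [← Finset.inter_union_distrib_left]
    exact Finset.inter_eq_left.2 h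
  · rintro ⟨a, b⟩ h
    rfl

lemma NS.mul {K : Type*} [Field K] {U₁ U₂ V₁ V₂ : Finset ℕ} {h₁ h₂ h : Finset ℕ → K}
    (n₁ : NS U₁ V₁ h₁) (n₂ : NS U₂ V₂ h₂) (hU : Disjoint U₁ U₂)
    (hh : ∀ y₁ ⊆ U₁, ∀ y₂ ⊆ U₂, ∀ z₁ ⊆ V₁, ∀ z₂ ⊆ V₂,
      h ((y₁ ∪ y₂) ∪ (z₁ ∪ z₂)) = h₁ (y₁ ∪ z₁) * h₂ (y₂ ∪ z₂)) :
    NS (U₁ ∪ U₂) (V₁ ∪ V₂) h := by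
  intro c hc
  have key : ∀ z₂ ⊆ V₂, ∀ y₁ ⊆ U₁,
      ∑ y₂ ∈ U₂.powerset, c (y₁ ∪ y₂) * h₂ (y₂ ∪ z₂) = 0 := by
    intro z₂ hz₂
    apply n₁ (fun y₁ => ∑ y₂ ∈ U₂.powerset, c (y₁ ∪ y₂) * h₂ (y₂ ∪ z₂))
    intro z₁ hz₁
    have := hc (z₁ ∪ z₂) (Finset.union_subset_union hz₁ hz₂)
    rw [sum_powerset_union hU] at this
    rw [← this]
    refine Finset.sum_congr rfl fun y₁ hy₁ => ?_
    rw [Finset.sum_mul]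
    refine Finset.sum_congr rfl fun y₂ hy₂ => ?_
    rw [hh y₁ (Finset.mem_powerset.1 hy₁) y₂ (Finset.mem_powerset.1 hy₂) z₁ hz₁ z₂ hz₂]
    ring
  intro y hy
  have h2 : y = (y ∩ U₁) ∪ (y ∩ U₂) := by
    rw [← Finset.inter_union_distrib_left]
    exact (Finset.inter_eq_left.2 hy).symm
  rw [h2]
  exact n₂ (fun y₂ => c (y ∩ U₁ ∪ y₂)) (fun z₂ hz₂ => key z₂ hz₂ _ Finset.inter_subset_right) _
    Finset.inter_subset_right

lemma NS.pair {K : Type*} [Field K] (i j a b : ℕ) (hij : i ≠ j)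
    (hab : (a = i ∧ b = j) ∨ (a = j ∧ b = i)) :
    NS {i} {j} (fun S => (1 + (if a ∈ S then (1 : K) else 0) * (if b ∈ S then 1 else 0))) := by
  intro c hc
  have e : ({i} : Finset ℕ).powerset = {∅, {i}} := by
    ext x; simp [Finset.subset_singleton_iff]
  have h0 := hc ∅ (by simp)
  have h1 := hc {j} (by simp)
  rw [e, Finset.sum_pair (by simp)] at h0 h1
  have key : c ∅ = 0 ∧ c {i} = 0 := by
    rcases hab with ⟨rfl, rfl⟩ | ⟨rfl, rfl⟩
    · simp [hij, hij.symm] at h0 h1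
      exact ⟨by linear_combination 2 * h0 - h1, by linear_combination h1 - h0⟩
    · simp [hij, hij.symm] at h0 h1
      exact ⟨by linear_combination 2 * h0 - h1, by linear_combination h1 - h0⟩
  intro y hy
  rcases Finset.subset_singleton_iff.1 hy with rfl | rfl
  · exact key.1
  · exact key.2

lemma NS.empty {K : Type*} [Field K] (h : Finset ℕ → K) (hh : h ∅ = 1) : NS ∅ ∅ h := by
  intro c hc y hy
  have := hc ∅ (by simp)
  simp [hh] at this
  rw [Finset.subset_empty.1 hy, this]

/-- The square matrix associated with an equivalence of the row and column index sets. -/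
def sqm {R : Type*} (U V : Finset ℕ) (e : ↥(U.powerset) ≃ ↥(V.powerset))
    (h : Finset ℕ → R) : Matrix ↥(U.powerset) ↥(U.powerset) R :=
  fun y y' => h (y.1 ∪ (e y').1)

lemma NS_iff_det {K : Type*} [Field K] (U V : Finset ℕ) (e : ↥(U.powerset) ≃ ↥(V.powerset))
    (h : Finset ℕ → K) : NS U V h ↔ (sqm U V e h).det ≠ 0 := by
  rw [Ne, ← Matrix.exists_vecMul_eq_zero_iff]
  constructor
  · rintro hn ⟨v, hv, hv0⟩
    apply hv
    let c : Finset ℕ → K := fun y => if hy : y ∈ U.powerset then v ⟨y, hy⟩ else 0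
    have := hn c (by
      intro z hz
      have h1 := congrFun hv0 (e.symm ⟨z, Finset.mem_powerset.2 hz⟩)
      simp only [Matrix.vecMul, dotProduct, sqm, Equiv.apply_symm_apply, Pi.zero_apply] at h1
      rw [← h1, ← Finset.sum_coe_sort]
      refine Finset.sum_congr rfl fun y _ => ?_
      simp [c, Finset.mem_powerset.1 y.2])
    funext y
    have h2 := this y.1 (Finset.mem_powerset.1 y.2)
    simpa [c, Finset.mem_powerset.1 y.2] using h2
  · intro hn c hc y hy
    by_contra hcy
    apply hn
    refine ⟨fun y => c y.1, ?_, ?_⟩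
    · intro h0
      exact hcy (congrFun h0 ⟨y, Finset.mem_powerset.2 hy⟩)
    · funext y'
      have := hc (e y').1 (Finset.mem_powerset.1 (e y').2)
      rw [← Finset.sum_coe_sort] at this
      simpa [Matrix.vecMul, dotProduct, sqm] using this

lemma exists_pow_equiv {U V : Finset ℕ} (h : U.card = V.card) :
    Nonempty (↥(U.powerset) ≃ ↥(V.powerset)) := by
  apply Fintype.card_eq.1
  simp [h]

lemma NS.perturb {K : Type*} [Field K] [Infinite K] {U V : Finset ℕ} (hc : U.card = V.card)
    (h₀ h₁ : Finset ℕ → K) (n₁ : NS U V h₁) : ∃ t : K, NS U V (fun S => h₀ S + t * h₁ S) := by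
  obtain ⟨e⟩ := exists_pow_equiv hc
  rw [NS_iff_det U V e] at n₁
  let p : Polynomial K := Matrix.det ((Polynomial.X : Polynomial K) • (sqm U V e h₁).map Polynomial.C
    + (sqm U V e h₀).map Polynomial.C)
  have hp : p ≠ 0 := by
    intro h0
    apply n₁
    rw [← Polynomial.coeff_det_X_add_C_card (sqm U V e h₁) (sqm U V e h₀)]
    change p.coeff _ = 0
    rw [h0]; simp
  obtain ⟨t, ht⟩ : ∃ t, ¬ p.IsRoot t := by
    by_contra hcon
    push Not at hcon
    exact hp (Polynomial.eq_zero_of_infinite_isRoot p (by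
      have : {x | p.IsRoot x} = Set.univ := by ext x; simpa using hcon x
      rw [this]; exact Set.infinite_univ))
  refine ⟨t, ?_⟩
  rw [NS_iff_det U V e]
  intro h0
  apply ht
  rw [Polynomial.IsRoot.def, ← h0]
  change (Polynomial.evalRingHom t) p = _
  simp only [p]
  rw [RingHom.map_det]
  congr 1
  ext y y'
  simp [sqm]
  ring

/-- Low rank witness. -/
def LR {K : Type*} [Field K] (U V : Finset ℕ) (h : Finset ℕ → K) (R : ℕ) : Prop :=
  ∃ (I : Type) (_ : Fintype I) (α β : I → Finset ℕ → K), Fintype.card I ≤ R ∧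
    ∀ y ⊆ U, ∀ z ⊆ V, h (y ∪ z) = ∑ t, α t y * β t z

lemma LR.symm {K : Type*} [Field K] {U V : Finset ℕ} {h : Finset ℕ → K} {R : ℕ}
    (hl : LR U V h R) : LR V U h R := by
  obtain ⟨I, _, α, β, hI, hh⟩ := hl
  refine ⟨I, inferInstance, β, α, hI, fun y hy z hz => ?_⟩
  rw [Finset.union_comm, hh z hz y hy]
  exact Finset.sum_congr rfl fun t _ => mul_comm _ _

lemma LR.sum {K : Type*} [Field K] {U V : Finset ℕ} {m : ℕ} {h : Fin m → Finset ℕ → K} {R : ℕ}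
    (hl : ∀ i, LR U V (h i) R) : LR U V (fun S => ∑ i, h i S) (m * R) := by
  choose I hI α β hc hh using hl
  refine ⟨Σ i, I i, inferInstance, fun p => α p.1 p.2, fun p => β p.1 p.2, ?_, ?_⟩
  · rw [Fintype.card_sigma]
    calc ∑ i, Fintype.card (I i) ≤ ∑ i : Fin m, R := Finset.sum_le_sum fun i _ => hc i
      _ = m * R := by simp
  · intro y hy z hz
    rw [Fintype.sum_sigma]
    exact Finset.sum_congr rfl fun i _ => hh i y hy z hz

lemma NS.le_of_LR {K : Type*} [Field K] {U V : Finset ℕ} {h : Finset ℕ → K} {R : ℕ}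
    (hn : NS U V h) (hl : LR U V h R) : 2 ^ U.card ≤ R := by
  obtain ⟨I, _, α, β, hI, hh⟩ := hl
  refine le_trans ?_ hI
  let L : (↥(U.powerset) → K) →ₗ[K] (I → K) :=
    { toFun := fun v t => ∑ y, v y * α t y.1
      map_add' := by
        intro v v'; funext t; simp [add_mul, Finset.sum_add_distrib]
      map_smul' := by
        intro a v; funext t; simp [Finset.mul_sum, mul_assoc] }
  have hinj : Function.Injective L := by
    rw [← LinearMap.ker_eq_bot, LinearMap.ker_eq_bot']
    intro v hv
    let c : Finset ℕ → K := fun y => if hy : y ∈ U.powerset then v ⟨y, hy⟩ else 0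
    have := hn c (by
      intro z hz
      have : ∀ y ∈ U.powerset, c y * h (y ∪ z) = ∑ t, c y * α t y * β t z := by
        intro y hy
        rw [hh y (Finset.mem_powerset.1 hy) z hz, Finset.mul_sum]
        exact Finset.sum_congr rfl fun t _ => by ring
      rw [Finset.sum_congr rfl this, Finset.sum_comm]
      apply Finset.sum_eq_zero
      intro t _
      rw [← Finset.sum_mul]
      have h1 := congrFun hv t
      have h2 : ∑ y ∈ U.powerset, c y * α t y = 0 := by
        rw [← Finset.sum_coe_sort]
        rw [Pi.zero_apply] at h1
        rw [← h1]
        refine Finset.sum_congr rfl fun y _ => ?_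
        simp [c, Finset.mem_powerset.1 y.2]
      rw [h2, zero_mul])
    funext y
    have h2 := this y.1 (Finset.mem_powerset.1 y.2)
    simpa [c, Finset.mem_powerset.1 y.2] using h2
  have := LinearMap.finrank_le_finrank_of_injective hinj
  simpa using this

lemma LR.of_block {K : Type*} [Field K] {w : ℕ} (X A B : Finset ℕ) (hA : A ⊆ X)
    (h : Finset ℕ → K) (Q H : Fin w → Fin w → Finset ℕ → K)
    (hh : ∀ S ⊆ X, h S = ∑ a, ∑ b, Q a b (S ∩ B) * H a b (S \ B)) :
    LR A (X \ A) h (w * w * (2 ^ (A ∩ B).card * 2 ^ ((X \ A) \ B).card)) := by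
  refine ⟨(Fin w × Fin w) × (↥((A ∩ B).powerset) × ↥(((X \ A) \ B).powerset)), inferInstance,
    fun p y => if y ∩ B = p.2.1.1 then H p.1.1 p.1.2 ((y \ B) ∪ p.2.2.1) else 0,
    fun p z => if z \ B = p.2.2.1 then Q p.1.1 p.1.2 (p.2.1.1 ∪ (z ∩ B)) else 0, ?_, ?_⟩
  · rw [Fintype.card_prod, Fintype.card_prod, Fintype.card_prod, Fintype.card_coe, Fintype.card_coe,
      Finset.card_powerset, Finset.card_powerset, Fintype.card_fin]
  · intro y hy z hz
    rw [hh (y ∪ z) (Finset.union_subset (hy.trans hA) (hz.trans Finset.sdiff_subset)),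
      Fintype.sum_prod_type, Fintype.sum_prod_type]
    refine Finset.sum_congr rfl fun a _ => Finset.sum_congr rfl fun b _ => ?_
    rw [Fintype.sum_prod_type]
    rw [Finset.sum_eq_single ⟨y ∩ B, Finset.mem_powerset.2 (Finset.inter_subset_inter_right hy)⟩]
    · rw [Finset.sum_eq_single ⟨z \ B, Finset.mem_powerset.2 (Finset.sdiff_subset_sdiff hz le_rfl)⟩]
      · simp [Finset.union_inter_distrib_right, Finset.union_sdiff_distrib, mul_comm]
      · rintro ⟨v, hv⟩ _ hne
        have : z \ B ≠ v := fun h => hne (by simp [h])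
        simp [this]
      · simp
    · rintro ⟨u, hu⟩ _ hne
      have : y ∩ B ≠ u := fun h => hne (by simp [h])
      simp [this]
    · simp

/-! ### Part 2: full rank of the Raz–Yehudayoff polynomial -/

/-- Values of the Raz–Yehudayoff polynomial of half-length `ℓ` starting at `i`. -/
def HV {R : Type*} [CommRing R] (w : ℕ → ℕ → ℕ → R) : ℕ → ℕ → Finset ℕ → R
  | 0, _, _ => 1
  | ℓ + 1, i, S =>
      (1 + (if i ∈ S then 1 else 0) * (if i + 2 * ℓ + 1 ∈ S then 1 else 0)) * HV w ℓ (i + 1) S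
        + ∑ p : Fin ℓ, w i (i + 2 * p.1 + 1) (i + 2 * ℓ + 1) * HV w (p.1 + 1) i S
            * HV w (ℓ - p.1) (i + 2 * p.1 + 2) S
  termination_by ℓ => ℓ
  decreasing_by all_goals omega

/-- Evaluation at the indicator of `S`. -/
def ev {K : Type*} [CommSemiring K] (S : Finset ℕ) : MvPolynomial ℕ K →+* K :=
  MvPolynomial.eval (fun x => if x ∈ S then 1 else 0)

lemma ev_RY (F : Type*) [Field F] (S : Finset ℕ) : ∀ fuel ℓ i : ℕ, 1 ≤ i → ℓ ≤ fuel →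
    ev S (RY F fuel i (i + 2 * ℓ - 1)) = HV (wv F) ℓ i S := by
  intro fuel
  induction fuel with
  | zero =>
    intro ℓ i hi hl
    obtain rfl : ℓ = 0 := by omega
    rw [RY, HV]; simp
  | succ fuel ih =>
    intro ℓ i hi hl
    rcases ℓ with _ | ℓ
    · rw [RY, HV, if_pos (by omega)]; simp
    · rw [RY, HV, if_neg (by omega), map_add, map_mul, map_sum]
      have e1 : i + 2 * (ℓ + 1) - 1 - 1 = (i + 1) + 2 * ℓ - 1 := by omega
      have e2 : i + 2 * (ℓ + 1) - 1 = i + 2 * ℓ + 1 := by omega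
      rw [e1, ih ℓ (i + 1) (by omega) (by omega), e2]
      congr 1
      · simp [ev]
      · symm
        refine Finset.sum_bij (fun p _ => i + 2 * p.1 + 1) ?_ ?_ ?_ ?_
        · intro p _
          have := p.2
          simp only [Finset.mem_filter, Finset.mem_Icc]
          omega
        · intro p _ p' _ h
          ext; simp at h; omega
        · intro k hk
          simp only [Finset.mem_filter, Finset.mem_Icc] at hk
          refine ⟨⟨(k - i - 1) / 2, by omega⟩, Finset.mem_univ _, ?_⟩
          simp only
          omega
        · intro p _
          have hp := p.2
          have e3 : i + 2 * p.1 + 1 = i + 2 * (p.1 + 1) - 1 := by omega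
          have e4 : i + 2 * ℓ + 1 = (i + 2 * p.1 + 2) + 2 * (ℓ - p.1) - 1 := by omega
          have h1 := ih (p.1 + 1) i hi (by omega)
          have h2 := ih (ℓ - p.1) (i + 2 * p.1 + 2) (by omega) (by omega)
          rw [← e3] at h1
          rw [← e4] at h2
          rw [map_mul, map_mul, h1, h2]
          simp [ev]

lemma HV_map {R R' : Type*} [CommRing R] [CommRing R'] (φ : R →+* R') (w : ℕ → ℕ → ℕ → R)
    (S : Finset ℕ) : ∀ n ℓ i : ℕ, ℓ ≤ n →
    φ (HV w ℓ i S) = HV (fun a b c => φ (w a b c)) ℓ i S := by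
  intro n
  induction n with
  | zero => intro ℓ i hl; obtain rfl : ℓ = 0 := by omega
            simp [HV]
  | succ n ih =>
    intro ℓ i hl
    rcases ℓ with _ | ℓ
    · simp [HV]
    · rw [HV, HV, map_add, map_mul, ih ℓ _ (by omega), map_sum]
      congr 1
      · congr 1
        simp only [map_add, map_mul, map_one]
        congr 2 <;> split_ifs <;> simp
      · refine Finset.sum_congr rfl fun p _ => ?_
        have := p.2
        rw [map_mul, map_mul, ih _ _ (by omega), ih _ _ (by omega)]

lemma HV_congr_w {R : Type*} [CommRing R] (w w' : ℕ → ℕ → ℕ → R) (m : ℕ)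
    (hw : ∀ i k j, j < i + 2 * m + 1 → w i k j = w' i k j)
    (S : Finset ℕ) : ∀ n ℓ i : ℕ, ℓ ≤ n → ℓ ≤ m → HV w ℓ i S = HV w' ℓ i S := by
  intro n
  induction n with
  | zero => intro ℓ i hl; obtain rfl : ℓ = 0 := by omega
            simp [HV]
  | succ n ih =>
    intro ℓ i hl hm
    rcases ℓ with _ | ℓ
    · simp [HV]
    · rw [HV, HV, ih ℓ _ (by omega) (by omega)]
      congr 1
      refine Finset.sum_congr rfl fun p _ => ?_
      have := p.2
      rw [ih _ _ (by omega) (by omega), ih _ _ (by omega) (by omega), hw _ _ _ (by omega)]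

lemma HV_congr_S {R : Type*} [CommRing R] (w : ℕ → ℕ → ℕ → R) (S S' : Finset ℕ) :
    ∀ n ℓ i : ℕ, ℓ ≤ n → (∀ x, i ≤ x → x < i + 2 * ℓ → (x ∈ S ↔ x ∈ S')) →
    HV w ℓ i S = HV w ℓ i S' := by
  intro n
  induction n with
  | zero => intro ℓ i hl; obtain rfl : ℓ = 0 := by omega
            simp [HV]
  | succ n ih =>
    intro ℓ i hl hm
    rcases ℓ with _ | ℓ
    · simp [HV]
    · rw [HV, HV, ih ℓ _ (by omega) (fun x h1 h2 => hm x (by omega) (by omega))]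
      simp only [hm i le_rfl (by omega), hm (i + 2 * ℓ + 1) (by omega) (by omega)]
      congr 1
      refine Finset.sum_congr rfl fun p _ => ?_
      have := p.2
      rw [ih (p.1 + 1) _ (by omega) (fun x h1 h2 => hm x (by omega) (by omega)),
        ih (ℓ - p.1) _ (by omega) (fun x h1 h2 => hm x (by omega) (by omega))]

lemma ivt_zero (d : ℕ → ℤ) (n : ℕ) (h1 : 0 ≤ d 1) (hn : d n ≤ 0) (hn1 : 1 ≤ n)
    (hs : ∀ p, d p - 1 ≤ d (p + 1)) : ∃ p, 1 ≤ p ∧ p ≤ n ∧ d p = 0 := by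
  classical
  have hex : ∃ p, 1 ≤ p ∧ d p ≤ 0 := ⟨n, hn1, hn⟩
  obtain ⟨ha, hb⟩ := Nat.find_spec hex
  have hle : Nat.find hex ≤ n := Nat.find_min' hex ⟨hn1, hn⟩
  refine ⟨Nat.find hex, ha, hle, ?_⟩
  rcases Nat.lt_or_ge 1 (Nat.find hex) with h | h
  · have hm := Nat.find_min hex (m := Nat.find hex - 1) (by omega)
    have h2 := hs (Nat.find hex - 1)
    rw [show Nat.find hex - 1 + 1 = Nat.find hex by omega] at h2
    have : ¬ d (Nat.find hex - 1) ≤ 0 := fun h => hm ⟨by omega, h⟩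
    omega
  · have e : Nat.find hex = 1 := by omega
    rw [e] at hb ⊢
    omega

lemma card_inter_Ico_succ (A : Finset ℕ) (i m : ℕ) (h : i ≤ m) :
    (A ∩ Finset.Ico i (m + 1)).card = (A ∩ Finset.Ico i m).card + if m ∈ A then 1 else 0 := by
  have e : Finset.Ico i (m + 1) = insert m (Finset.Ico i m) := by
    ext x; simp only [Finset.mem_Ico, Finset.mem_insert]; omega
  rw [e]
  split_ifs with hm
  · rw [Finset.inter_insert_of_mem hm, Finset.card_insert_of_notMem (by simp)]
  · rw [Finset.inter_insert_of_notMem hm, add_zero]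

lemma exists_balanced_split (A : Finset ℕ) (i n : ℕ)
    (hb : (A ∩ Finset.Ico i (i + 2 * (n + 1))).card = n + 1)
    (hs : i ∈ A ↔ i + 2 * n + 1 ∈ A) :
    ∃ p : Fin n, (A ∩ Finset.Ico i (i + 2 * (p.1 + 1))).card = p.1 + 1 := by
  let d : ℕ → ℤ := fun p => ((A ∩ Finset.Ico i (i + 2 * p)).card : ℤ) - p
  have step : ∀ p, d (p + 1) = d p + (if i + 2 * p ∈ A then 1 else 0)
      + (if i + 2 * p + 1 ∈ A then 1 else 0) - 1 := by
    intro p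
    simp only [d]
    rw [show i + 2 * (p + 1) = (i + 2 * p + 1) + 1 by ring, card_inter_Ico_succ _ _ _ (by omega),
      card_inter_Ico_succ _ _ _ (by omega)]
    push_cast
    ring
  have d0 : d 0 = 0 := by simp [d]
  have dn : d (n + 1) = 0 := by simp only [d]; rw [hb]; simp
  have h01 := step 0
  rw [d0] at h01
  simp only [mul_zero, add_zero, zero_add] at h01
  have hnn := step n
  rw [dn] at hnn
  have key : ∃ p, 1 ≤ p ∧ p ≤ n ∧ d p = 0 := by
    rcases Nat.eq_zero_or_pos n with rfl | hn
    · exfalso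
      simp only [mul_zero, add_zero] at hnn hs
      rw [d0] at hnn
      by_cases hi : i ∈ A
      · have := hs.1 hi; simp [hi, this] at hnn
      · have : i + 1 ∉ A := fun h => hi (hs.2 h)
        simp [hi, this] at hnn
    by_cases hi : i ∈ A
    · have hj := hs.1 hi
      apply ivt_zero d n
      · rw [h01]; simp only [hi, if_true]; split_ifs <;> norm_num
      · simp only [hj, if_true] at hnn; split_ifs at hnn <;> omega
      · exact hn
      · intro p; rw [step p]; split_ifs <;> omega
    · have hj : i + 2 * n + 1 ∉ A := fun h => hi (hs.2 h)
      obtain ⟨p, h1, h2, h3⟩ := ivt_zero (fun p => - d p) n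
        (by rw [h01]; simp only [hi, if_false]; split_ifs <;> norm_num)
        (by simp only [hj, if_false] at hnn; split_ifs at hnn <;> omega)
        hn (by intro p; rw [step p]; split_ifs <;> omega)
      exact ⟨p, h1, h2, by simpa using h3⟩
  obtain ⟨p, h1, h2, h3⟩ := key
  refine ⟨⟨p - 1, by omega⟩, ?_⟩
  simp only [show p - 1 + 1 = p by omega]
  simp only [d] at h3
  omega

lemma card_sdiff_Ico (A : Finset ℕ) (i n : ℕ)
    (hb : (A ∩ Finset.Ico i (i + 2 * n)).card = n) : (Finset.Ico i (i + 2 * n) \ A).card = n := by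
  have h := Finset.card_sdiff_add_card_inter (Finset.Ico i (i + 2 * n)) A
  rw [Finset.inter_comm, hb, Nat.card_Ico] at h
  omega

lemma NS_step {K : Type*} [Field K] [Infinite K] (A : Finset ℕ) (w : ℕ → ℕ → ℕ → K) (n i : ℕ)
    (ih : ∀ ℓ ≤ n, ∀ i, (A ∩ Finset.Ico i (i + 2 * ℓ)).card = ℓ →
      NS (A ∩ Finset.Ico i (i + 2 * ℓ)) (Finset.Ico i (i + 2 * ℓ) \ A) (HV w ℓ i))
    (hb : (A ∩ Finset.Ico i (i + 2 * (n + 1))).card = n + 1) :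
    ∃ v : ℕ → K, NS (A ∩ Finset.Ico i (i + 2 * (n + 1))) (Finset.Ico i (i + 2 * (n + 1)) \ A)
      (fun S => (1 + (if i ∈ S then 1 else 0) * (if i + 2 * n + 1 ∈ S then 1 else 0))
          * HV w n (i + 1) S
        + ∑ p : Fin n, v (i + 2 * p.1 + 1) * HV w (p.1 + 1) i S
            * HV w (n - p.1) (i + 2 * p.1 + 2) S) := by
  by_cases hs : i ∈ A ↔ i + 2 * n + 1 ∈ A
  · obtain ⟨p, hp⟩ := exists_balanced_split A i n hb hs
    have hpn := p.2
    have eI : Finset.Ico i (i + 2 * (n + 1)) = Finset.Ico i (i + 2 * (p.1 + 1)) ∪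
        Finset.Ico (i + 2 * p.1 + 2) (i + 2 * p.1 + 2 + 2 * (n - p.1)) := by
      ext x; simp only [Finset.mem_Ico, Finset.mem_union]; omega
    have hdI : Disjoint (Finset.Ico i (i + 2 * (p.1 + 1)))
        (Finset.Ico (i + 2 * p.1 + 2) (i + 2 * p.1 + 2 + 2 * (n - p.1))) := by
      rw [Finset.disjoint_left]; intro x; simp only [Finset.mem_Ico]; omega
    have eU : A ∩ Finset.Ico i (i + 2 * (n + 1)) = (A ∩ Finset.Ico i (i + 2 * (p.1 + 1))) ∪
        (A ∩ Finset.Ico (i + 2 * p.1 + 2) (i + 2 * p.1 + 2 + 2 * (n - p.1))) := by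
      rw [eI, Finset.inter_union_distrib_left]
    have hdU : Disjoint (A ∩ Finset.Ico i (i + 2 * (p.1 + 1)))
        (A ∩ Finset.Ico (i + 2 * p.1 + 2) (i + 2 * p.1 + 2 + 2 * (n - p.1))) :=
      hdI.mono Finset.inter_subset_right Finset.inter_subset_right
    have eV : Finset.Ico i (i + 2 * (n + 1)) \ A = (Finset.Ico i (i + 2 * (p.1 + 1)) \ A) ∪
        (Finset.Ico (i + 2 * p.1 + 2) (i + 2 * p.1 + 2 + 2 * (n - p.1)) \ A) := by
      rw [eI, Finset.union_sdiff_distrib]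
    have hq : (A ∩ Finset.Ico (i + 2 * p.1 + 2) (i + 2 * p.1 + 2 + 2 * (n - p.1))).card
        = n - p.1 := by
      rw [eU, Finset.card_union_of_disjoint hdU, hp] at hb
      omega
    have n1 : NS (A ∩ Finset.Ico i (i + 2 * (n + 1))) (Finset.Ico i (i + 2 * (n + 1)) \ A)
        (fun S => HV w (p.1 + 1) i S * HV w (n - p.1) (i + 2 * p.1 + 2) S) := by
      rw [eU, eV]
      refine NS.mul (ih _ (by omega) _ hp) (ih _ (by omega) _ hq) hdU ?_
      intro y₁ hy₁ y₂ hy₂ z₁ hz₁ z₂ hz₂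
      congr 1
      · apply HV_congr_S w _ _ _ _ _ le_rfl
        intro x hx1 hx2
        have a2 : x ∉ y₂ := fun h => by
          have := hy₂ h; simp only [Finset.mem_inter, Finset.mem_Ico] at this; omega
        have b2 : x ∉ z₂ := fun h => by
          have := hz₂ h; simp only [Finset.mem_sdiff, Finset.mem_Ico] at this; omega
        simp only [Finset.mem_union]; tauto
      · apply HV_congr_S w _ _ _ _ _ le_rfl
        intro x hx1 hx2
        have a2 : x ∉ y₁ := fun h => by
          have := hy₁ h; simp only [Finset.mem_inter, Finset.mem_Ico] at this; omega
        have b2 : x ∉ z₁ := fun h => by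
          have := hz₁ h; simp only [Finset.mem_sdiff, Finset.mem_Ico] at this; omega
        simp only [Finset.mem_union]; tauto
    obtain ⟨t, ht⟩ := NS.perturb (by rw [hb, card_sdiff_Ico A i (n + 1) hb])
      (fun S => (1 + (if i ∈ S then 1 else 0) * (if i + 2 * n + 1 ∈ S then 1 else 0))
          * HV w n (i + 1) S) _ n1
    refine ⟨fun k => if k = i + 2 * p.1 + 1 then t else 0, ?_⟩
    convert ht using 4 with S
    rw [Finset.sum_eq_single p]
    · simp; ring
    · intro b _ hbp
      have : b.1 ≠ p.1 := fun h => hbp (Fin.ext h)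
      simp [this]
    · simp
  · refine ⟨fun _ => 0, ?_⟩
    simp only [zero_mul, Finset.sum_const_zero, add_zero]
    have eI : Finset.Ico i (i + 2 * (n + 1)) = {i, i + 2 * n + 1} ∪
        Finset.Ico (i + 1) (i + 1 + 2 * n) := by
      ext x; simp only [Finset.mem_Ico, Finset.mem_union, Finset.mem_insert,
        Finset.mem_singleton]; omega
    -- the endpoints lie on opposite sides
    obtain ⟨a, b, hab, ha, hbA⟩ : ∃ a b, ((i = a ∧ i + 2 * n + 1 = b) ∨
        (i = b ∧ i + 2 * n + 1 = a)) ∧ a ∈ A ∧ b ∉ A := by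
      by_cases hi : i ∈ A
      · exact ⟨i, i + 2 * n + 1, Or.inl ⟨rfl, rfl⟩, hi, fun h => hs (by simp [hi, h])⟩
      · exact ⟨i + 2 * n + 1, i, Or.inr ⟨rfl, rfl⟩, by
          by_contra h; exact hs (by simp [hi, h]), hi⟩
    have habne : a ≠ b := fun h => hbA (h ▸ ha)
    have eP : ({i, i + 2 * n + 1} : Finset ℕ) = {a, b} := by
      rcases hab with ⟨rfl, rfl⟩ | ⟨rfl, rfl⟩
      · rfl
      · exact Finset.pair_comm _ _
    have eU : A ∩ Finset.Ico i (i + 2 * (n + 1)) = {a} ∪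
        (A ∩ Finset.Ico (i + 1) (i + 1 + 2 * n)) := by
      rw [eI, eP, Finset.inter_union_distrib_left]
      congr 1
      ext x; simp only [Finset.mem_inter, Finset.mem_insert, Finset.mem_singleton]
      constructor
      · rintro ⟨h1, rfl | rfl⟩
        · rfl
        · exact absurd h1 hbA
      · rintro rfl; exact ⟨ha, Or.inl rfl⟩
    have eV : Finset.Ico i (i + 2 * (n + 1)) \ A = {b} ∪
        (Finset.Ico (i + 1) (i + 1 + 2 * n) \ A) := by
      rw [eI, eP, Finset.union_sdiff_distrib]
      congr 1
      ext x; simp only [Finset.mem_sdiff, Finset.mem_insert, Finset.mem_singleton]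
      constructor
      · rintro ⟨rfl | rfl, h1⟩
        · exact absurd ha h1
        · rfl
      · rintro rfl; exact ⟨Or.inr rfl, hbA⟩
    have hdU : Disjoint {a} (A ∩ Finset.Ico (i + 1) (i + 1 + 2 * n)) := by
      rw [Finset.disjoint_singleton_left]
      simp only [Finset.mem_inter, Finset.mem_Ico]
      omega
    have hq : (A ∩ Finset.Ico (i + 1) (i + 1 + 2 * n)).card = n := by
      rw [eU, Finset.card_union_of_disjoint hdU, Finset.card_singleton] at hb
      omega
    rw [eU, eV]
    refine NS.mul (NS.pair a b i (i + 2 * n + 1) habne hab) (ih n le_rfl (i + 1) hq) hdU ?_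
    intro y₁ hy₁ y₂ hy₂ z₁ hz₁ z₂ hz₂
    have out : ∀ x, (x = i ∨ x = i + 2 * n + 1) → x ∉ y₂ ∧ x ∉ z₂ := by
      intro x hx
      constructor
      · intro h; have := hy₂ h; simp only [Finset.mem_inter, Finset.mem_Ico] at this; omega
      · intro h; have := hz₂ h; simp only [Finset.mem_sdiff, Finset.mem_Ico] at this; omega
    have o1 := out i (Or.inl rfl)
    have o2 := out _ (Or.inr rfl)
    congr 1
    · simp [o1, o2]
    · apply HV_congr_S w _ _ _ _ _ le_rfl
      intro x hx1 hx2
      have a2 : x ∉ y₁ := fun h => by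
        have := hy₁ h; simp only [Finset.mem_singleton] at this; omega
      have b2 : x ∉ z₁ := fun h => by
        have := hz₁ h; simp only [Finset.mem_singleton] at this; omega
      simp only [Finset.mem_union]; tauto

lemma exists_weights {K : Type*} [Field K] [Infinite K] (A : Finset ℕ) (n : ℕ) :
    ∃ w : ℕ → ℕ → ℕ → K, ∀ ℓ ≤ n, ∀ i, (A ∩ Finset.Ico i (i + 2 * ℓ)).card = ℓ →
      NS (A ∩ Finset.Ico i (i + 2 * ℓ)) (Finset.Ico i (i + 2 * ℓ) \ A) (HV w ℓ i) := by
  induction n with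
  | zero =>
    refine ⟨fun _ _ _ => 0, fun ℓ hl i _ => ?_⟩
    obtain rfl : ℓ = 0 := by omega
    simp only [mul_zero, add_zero, Finset.Ico_self, Finset.inter_empty, Finset.empty_sdiff]
    exact NS.empty _ (by simp [HV])
  | succ n ihn =>
    obtain ⟨w, hw⟩ := ihn
    have h1 : ∀ i, ∃ v : ℕ → K, (A ∩ Finset.Ico i (i + 2 * (n + 1))).card = n + 1 →
      NS (A ∩ Finset.Ico i (i + 2 * (n + 1))) (Finset.Ico i (i + 2 * (n + 1)) \ A)
      (fun S => (1 + (if i ∈ S then 1 else 0) * (if i + 2 * n + 1 ∈ S then 1 else 0))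
          * HV w n (i + 1) S
        + ∑ p : Fin n, v (i + 2 * p.1 + 1) * HV w (p.1 + 1) i S
            * HV w (n - p.1) (i + 2 * p.1 + 2) S) := by
      intro i
      by_cases hb : (A ∩ Finset.Ico i (i + 2 * (n + 1))).card = n + 1
      · obtain ⟨v, hv⟩ := NS_step A w n i hw hb
        exact ⟨v, fun _ => hv⟩
      · exact ⟨fun _ => 0, fun h => absurd h hb⟩
    choose v hv using h1
    let w' : ℕ → ℕ → ℕ → K := fun i k j => if j < i + 2 * n + 1 then w i k j else v i k
    have hc : ∀ S ℓ i, ℓ ≤ n → HV w' ℓ i S = HV w ℓ i S := by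
      intro S ℓ i hl
      apply HV_congr_w w' w n _ S ℓ ℓ i le_rfl hl
      intro i k j h
      simp only [w', if_pos h]
    refine ⟨w', fun ℓ hl i hb => ?_⟩
    rcases Nat.lt_or_ge n ℓ with h | h
    · obtain rfl : ℓ = n + 1 := by omega
      convert hv i hb using 1
      funext S
      rw [HV, hc _ _ _ le_rfl]
      congr 1
      refine Finset.sum_congr rfl fun p _ => ?_
      have := p.2
      rw [hc _ _ _ (by omega), hc _ _ _ (by omega)]
      simp [w']
    · convert hw ℓ h i hb using 1
      funext S
      exact hc _ _ _ h

lemma NS_razPoly (F : Type*) [Field F] (n : ℕ) (A : Finset ℕ) (hA : A ⊆ Finset.Icc 1 (2 * n))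
    (hc : A.card = n) :
    NS A (Finset.Icc 1 (2 * n) \ A) (fun S => ev S (razPoly F (2 * n))) := by
  have eX : Finset.Icc 1 (2 * n) = Finset.Ico 1 (1 + 2 * n) := by
    ext x; simp only [Finset.mem_Icc, Finset.mem_Ico]; omega
  rw [eX] at hA ⊢
  have eA : A ∩ Finset.Ico 1 (1 + 2 * n) = A := Finset.inter_eq_left.2 hA
  obtain ⟨w, hw⟩ := exists_weights (K := AlgebraicClosure F) A n
  have h1 := hw n le_rfl 1 (by rw [eA, hc])
  rw [eA] at h1
  obtain ⟨e⟩ := exists_pow_equiv (U := A) (V := Finset.Ico 1 (1 + 2 * n) \ A) (by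
    rw [hc, card_sdiff_Ico A 1 n (by rw [eA, hc])])
  rw [NS_iff_det _ _ e] at h1 ⊢
  have h2 : (sqm A _ e (HV (R := MvPolynomial (ℕ × ℕ × ℕ) F) (fun a b c => MvPolynomial.X (a, b, c))
      n 1)).det ≠ 0 := by
    intro h0
    apply h1
    let φ : MvPolynomial (ℕ × ℕ × ℕ) F →+* AlgebraicClosure F :=
      (MvPolynomial.aeval (R := F) (fun t : ℕ × ℕ × ℕ => w t.1 t.2.1 t.2.2)).toRingHom
    have h3 := congrArg φ h0
    rw [RingHom.map_det, map_zero] at h3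
    rw [← h3]
    congr 1
    ext y y'
    simp only [sqm, RingHom.mapMatrix_apply, Matrix.map_apply]
    rw [HV_map φ _ _ n n 1 le_rfl]
    congr 1
    funext a b c
    simp [φ]
  intro h0
  apply h2
  apply IsFractionRing.injective (MvPolynomial (ℕ × ℕ × ℕ) F) (Gf F)
  rw [RingHom.map_det, map_zero, ← h0]
  congr 1
  ext y y'
  simp only [sqm, RingHom.mapMatrix_apply, Matrix.map_apply]
  rw [HV_map _ _ _ n n 1 le_rfl, razPoly]
  have := ev_RY F (y.1 ∪ (e y').1) (2 * n) n 1 le_rfl (by omega)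
  rw [show 1 + 2 * n - 1 = 2 * n by omega] at this
  rw [this]
  rfl

/-! ### Part 3: block decompositions of syntactically multilinear ABPs -/

lemma eval_mprodVal {K : Type*} [CommSemiring K] {n w : ℕ} (hw : 0 < w)
    (M : Fin n → Matrix (Fin w) (Fin w) (MvPolynomial ℕ K)) (S : Finset ℕ) :
    ev S (mprodVal hw M) = (List.ofFn fun ℓ => (M ℓ).map (ev S)).prod ⟨0, hw⟩ ⟨0, hw⟩ := by
  have h : ((ev S).mapMatrix (List.ofFn M).prod) = (List.ofFn fun ℓ => (M ℓ).map (ev S)).prod := by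
    rw [map_list_prod, List.map_ofFn]
    rfl
  rw [← h]
  rfl

/-- Product of the layers `a, …, b - 1`. -/
def rprod {Mn : Type*} [Monoid Mn] (A : ℕ → Mn) (a b : ℕ) : Mn :=
  ((List.range' a (b - a)).map A).prod

lemma rprod_mul {Mn : Type*} [Monoid Mn] (A : ℕ → Mn) {a b c : ℕ} (h1 : a ≤ b) (h2 : b ≤ c) :
    rprod A a b * rprod A b c = rprod A a c := by
  unfold rprod
  rw [← List.prod_append, ← List.map_append]
  congr 2
  have := List.range'_append_1 (s := a) (m := b - a) (n := c - b)
  rw [show a + (b - a) = b by omega, show b - a + (c - b) = c - a by omega] at this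
  exact this

lemma rprod_congr {Mn : Type*} [Monoid Mn] {A A' : ℕ → Mn} {a b : ℕ}
    (h : ∀ ℓ, a ≤ ℓ → ℓ < b → A ℓ = A' ℓ) : rprod A a b = rprod A' a b := by
  unfold rprod
  congr 1
  apply List.map_congr_left
  intro ℓ hl
  rw [List.mem_range'_1] at hl
  exact h ℓ (by omega) (by omega)

lemma ofFn_prod_eq {Mn : Type*} [Monoid Mn] (n : ℕ) (A : ℕ → Mn) :
    (List.ofFn fun ℓ : Fin n => A ℓ.1).prod = rprod A 0 n := by
  unfold rprod
  congr 1
  rw [Nat.sub_zero, ← List.range_eq_range']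
  apply List.ext_getElem
  · simp
  · intro i h1 h2
    simp

lemma exists_blocks {K : Type*} [Field K] (N n w : ℕ) (hw : 0 < w)
    (M : Fin n → Matrix (Fin w) (Fin w) (MvPolynomial ℕ K))
    (hone : ∀ ℓ a b a' b' v v', v ∈ (M ℓ a b).vars → v' ∈ (M ℓ a' b').vars → v = v')
    (htwo : ∀ ℓ ℓ' a b a' b' v, v ∈ (M ℓ a b).vars → v ∈ (M ℓ' a' b').vars → ℓ'.1 ≤ ℓ.1 + 1)
    (b : ℕ) :
    ∃ B : ℕ → Finset ℕ, (∀ j j', j ≠ j' → Disjoint (B j) (B j')) ∧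
      ∀ j, (j + 1) * b < N → B j ⊆ Finset.Icc 1 N ∧ (B j).card = b ∧
        ∃ Q H : Fin w → Fin w → Finset ℕ → K, ∀ S ⊆ Finset.Icc 1 N,
          ev S (mprodVal hw M) = ∑ x, ∑ y, Q x y (S ∩ B j) * H x y (S \ B j) := by
  classical
  -- the relation: layer ℓ reads v
  let R : ℕ → ℕ → Prop := fun ℓ v => ∃ (h : ℓ < n) (x y : Fin w), v ∈ (M ⟨ℓ, h⟩ x y).vars
  have R1 : ∀ ℓ v v', R ℓ v → R ℓ v' → v = v' := by
    rintro ℓ v v' ⟨h, x, y, h1⟩ ⟨_, x', y', h2⟩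
    exact hone _ _ _ _ _ _ _ h1 h2
  have R2 : ∀ ℓ ℓ' v, R ℓ v → R ℓ' v → ℓ' ≤ ℓ + 1 := by
    rintro ℓ ℓ' v ⟨h, x, y, h1⟩ ⟨h', x', y', h2⟩
    exact htwo ⟨ℓ, h⟩ ⟨ℓ', h'⟩ _ _ _ _ _ h1 h2
  have Rlt : ∀ ℓ v, R ℓ v → ℓ < n := fun ℓ v h => h.1
  let A : Finset ℕ → ℕ → Matrix (Fin w) (Fin w) K := fun S ℓ =>
    if h : ℓ < n then (M ⟨ℓ, h⟩).map (ev S) else 1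
  have hA : ∀ S S' ℓ, (∀ v, R ℓ v → (v ∈ S ↔ v ∈ S')) → A S ℓ = A S' ℓ := by
    intro S S' ℓ h
    simp only [A]
    split_ifs with hl
    · ext x y
      simp only [Matrix.map_apply, ev]
      apply MvPolynomial.eval₂Hom_congr' rfl _ rfl
      intro i hi _
      simp only [h i ⟨hl, x, y, hi⟩]
    · rfl
  have hval : ∀ S, ev S (mprodVal hw M) = rprod (A S) 0 n ⟨0, hw⟩ ⟨0, hw⟩ := by
    intro S
    rw [eval_mprodVal, ← ofFn_prod_eq]
    have e : (fun ℓ : Fin n => (M ℓ).map (ev S)) = fun ℓ : Fin n => A S ℓ.1 := by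
      funext ℓ
      simp [A]
    rw [e]
  -- first reading time
  let τ : ℕ → ℕ := fun v => if h : ∃ ℓ, R ℓ v then Nat.find h else n
  have τle : ∀ ℓ v, R ℓ v → τ v ≤ ℓ := by
    intro ℓ v h
    have hex : ∃ ℓ, R ℓ v := ⟨ℓ, h⟩
    simp only [τ, dif_pos hex]
    exact Nat.find_min' hex h
  have τn : ∀ v, τ v ≤ n := by
    intro v
    by_cases hex : ∃ ℓ, R ℓ v
    · obtain ⟨ℓ, h⟩ := hex
      exact (τle ℓ v h).trans (Rlt _ _ h).le
    · simp only [τ, dif_neg hex]; exact le_rfl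
  have τR : ∀ v, τ v < n → R (τ v) v := by
    intro v h
    by_cases hex : ∃ ℓ, R ℓ v
    · simp only [τ, dif_pos hex]; exact Nat.find_spec hex
    · simp only [τ, dif_neg hex] at h; omega
  let f : Fin N → ℕ := fun p => τ (p.1 + 1)
  let σ : Fin N → ℕ := fun p => (Tuple.sort f p).1 + 1
  have σinj : Function.Injective σ := by
    intro p p' h
    simp only [σ, Nat.add_right_cancel_iff] at h
    exact (Tuple.sort f).injective (Fin.ext h)
  have σmono : ∀ p p', p ≤ p' → τ (σ p) ≤ τ (σ p') := fun p p' h => Tuple.monotone_sort f h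
  have σsurj : ∀ v ∈ Finset.Icc 1 N, ∃ p, σ p = v := by
    intro v hv
    rw [Finset.mem_Icc] at hv
    refine ⟨(Tuple.sort f).symm ⟨v - 1, by omega⟩, ?_⟩
    simp only [σ, Equiv.apply_symm_apply]
    omega
  have σmem : ∀ p, σ p ∈ Finset.Icc 1 N := by
    intro p
    have := (Tuple.sort f p).2
    simp only [σ, Finset.mem_Icc]; omega
  have cut1 : ∀ ℓ p p', R ℓ (σ p') → ℓ < τ (σ p) → p' < p := by
    intro ℓ p p' hR hl
    by_contra hcon
    have h1 := σmono p p' (not_lt.1 hcon)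
    have h2 := τle _ _ hR
    omega
  have cut2 : ∀ ℓ p p', R ℓ (σ p') → τ (σ p) ≤ ℓ → p ≤ p' := by
    intro ℓ p p' hR hl
    by_contra hcon
    have hlt := not_le.1 hcon
    have h1 := σmono p' p hlt.le
    have hln := Rlt _ _ hR
    have hRp := τR (σ p) (by omega)
    have hRp' := τR (σ p') (by omega)
    have h3 := R2 _ _ _ hRp' hR
    have key : R (τ (σ p)) (σ p') := by
      rcases Nat.eq_or_lt_of_le h1 with h | h
      · rw [← h]; exact hRp'
      · have : τ (σ p) = ℓ := by omega
        rw [this]; exact hR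
    exact hlt.ne (σinj (R1 _ _ _ key hRp))
  refine ⟨fun j => (Finset.univ.filter fun p : Fin N => j * b ≤ p.1 ∧ p.1 < (j + 1) * b).image σ,
    ?_, ?_⟩
  · intro j j' hj
    rw [Finset.disjoint_left]
    intro x hx hx'
    simp only [Finset.mem_image, Finset.mem_filter, Finset.mem_univ, true_and] at hx hx'
    obtain ⟨p, ⟨h1, h2⟩, rfl⟩ := hx
    obtain ⟨p', ⟨h3, h4⟩, h5⟩ := hx'
    obtain rfl := σinj h5
    apply hj
    have a1 := lt_of_mul_lt_mul_right (lt_of_le_of_lt h1 h4) (Nat.zero_le _)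
    have a2 := lt_of_mul_lt_mul_right (lt_of_le_of_lt h3 h2) (Nat.zero_le _)
    omega
  · intro j hj
    have hj' : j * b ≤ (j + 1) * b := Nat.mul_le_mul_right _ (by omega)
    refine ⟨?_, ?_, ?_⟩
    · intro x hx
      simp only [Finset.mem_image] at hx
      obtain ⟨p, _, rfl⟩ := hx
      exact σmem p
    · rw [Finset.card_image_of_injective _ σinj]
      have : (Finset.univ.filter fun p : Fin N => j * b ≤ p.1 ∧ p.1 < (j + 1) * b)
          = Finset.Ico (⟨j * b, by omega⟩ : Fin N) ⟨(j + 1) * b, hj⟩ := by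
        ext p; simp [Fin.le_def, Fin.lt_def]
      rw [this, Fin.card_Ico]
      simp only
      rw [Nat.add_mul]; omega
    · set B := (Finset.univ.filter fun p : Fin N => j * b ≤ p.1 ∧ p.1 < (j + 1) * b).image σ with hB
      have hBmem : ∀ p, σ p ∈ B ↔ j * b ≤ p.1 ∧ p.1 < (j + 1) * b := by
        intro p
        simp only [hB, Finset.mem_image, Finset.mem_filter, Finset.mem_univ, true_and]
        constructor
        · rintro ⟨p', h, h'⟩; rw [← σinj h']; exact h
        · intro h; exact ⟨p, h, rfl⟩
      let p₁ : Fin N := ⟨j * b, by omega⟩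
      let p₂ : Fin N := ⟨(j + 1) * b, hj⟩
      let L₁ := τ (σ p₁)
      let L₂ := τ (σ p₂)
      have hL : L₁ ≤ L₂ := σmono _ _ (by simpa [p₁, p₂, Fin.le_def] using hj')
      refine ⟨fun x y T => rprod (A T) L₁ L₂ x y,
        fun x y T => rprod (A T) 0 L₁ ⟨0, hw⟩ x * rprod (A T) L₂ n y ⟨0, hw⟩, ?_⟩
      intro S hS
      rw [hval, ← rprod_mul (A S) (Nat.zero_le L₁) (τn _ : L₁ ≤ n),
        ← rprod_mul (A S) hL (τn _ : L₂ ≤ n), Matrix.mul_apply]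
      have c1 : rprod (A S) 0 L₁ = rprod (A (S \ B)) 0 L₁ := by
        apply rprod_congr
        intro ℓ _ hl
        apply hA
        intro v hR
        by_cases hv : v ∈ Finset.Icc 1 N
        · obtain ⟨p, rfl⟩ := σsurj v hv
          have := cut1 ℓ p₁ p hR hl
          simp only [Fin.lt_def, p₁] at this
          have hn : σ p ∉ B := by rw [hBmem]; omega
          simp [hn]
        · have : v ∉ S := fun h => hv (hS h)
          simp [this]
      have c2 : rprod (A S) L₂ n = rprod (A (S \ B)) L₂ n := by
        apply rprod_congr
        intro ℓ hl _
        apply hA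
        intro v hR
        by_cases hv : v ∈ Finset.Icc 1 N
        · obtain ⟨p, rfl⟩ := σsurj v hv
          have := cut2 ℓ p₂ p hR hl
          simp only [Fin.le_def, p₂] at this
          have hn : σ p ∉ B := by rw [hBmem]; omega
          simp [hn]
        · have : v ∉ S := fun h => hv (hS h)
          simp [this]
      have c3 : rprod (A S) L₁ L₂ = rprod (A (S ∩ B)) L₁ L₂ := by
        apply rprod_congr
        intro ℓ hl hl'
        apply hA
        intro v hR
        by_cases hv : v ∈ Finset.Icc 1 N
        · obtain ⟨p, rfl⟩ := σsurj v hv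
          have h1 := cut2 ℓ p₁ p hR hl
          have h2 := cut1 ℓ p₂ p hR hl'
          simp only [Fin.le_def, Fin.lt_def, p₁, p₂] at h1 h2
          have hn : σ p ∈ B := by rw [hBmem]; omega
          simp [hn]
        · have : v ∉ S := fun h => hv (hS h)
          simp [this]
      rw [c1, c2, c3]
      refine Finset.sum_congr rfl fun x _ => ?_
      rw [Matrix.mul_apply, Finset.mul_sum]
      refine Finset.sum_congr rfl fun y _ => ?_
      ring

lemma IsRPass.one {K : Type*} [Field K] {N w r : ℕ} {π : Fin r → ℕ → ℕ}
    {M : Fin (r * N) → Matrix (Fin w) (Fin w) (MvPolynomial ℕ K)} (h : IsRPass N w r π M) :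
    ∀ ℓ a b a' b' v v', v ∈ (M ℓ a b).vars → v' ∈ (M ℓ a' b').vars → v = v' := by
  intro ℓ a b a' b' v v' hv hv'
  have aux : ∀ (x y : Fin w) (u : ℕ), u ∈ (M ℓ x y).vars →
      u = π ⟨ℓ.val / N, Nat.div_lt_of_lt_mul (by rw [Nat.mul_comm N r]; exact ℓ.2)⟩
            (ℓ.val % N + 1) := by
    classical
    intro x y u hu
    obtain ⟨α, β, e⟩ := h.2.1 ℓ x y
    rw [e] at hu
    have h1 := MvPolynomial.vars_add_subset _ _ hu
    rw [MvPolynomial.vars_C, Finset.empty_union] at h1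
    have h2 := MvPolynomial.vars_mul _ _ h1
    rw [MvPolynomial.vars_C, Finset.empty_union, MvPolynomial.vars_X] at h2
    exact Finset.mem_singleton.1 h2
  rw [aux _ _ _ hv, aux _ _ _ hv']

lemma IsRPass.two {K : Type*} [Field K] {N w r : ℕ} {π : Fin r → ℕ → ℕ}
    {M : Fin (r * N) → Matrix (Fin w) (Fin w) (MvPolynomial ℕ K)} (h : IsRPass N w r π M) :
    ∀ ℓ ℓ' a b a' b' v, v ∈ (M ℓ a b).vars → v ∈ (M ℓ' a' b').vars → ℓ'.1 ≤ ℓ.1 + 1 := by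
  intro ℓ ℓ' a b a' b' v hv hv'
  by_contra hcon
  push Not at hcon
  let idx : Fin (r * N + 1) → Fin w := fun t =>
    if t.1 = ℓ.1 then a else if t.1 = ℓ.1 + 1 then b else if t.1 = ℓ'.1 then a' else b'
  have := h.2.2 idx v ℓ ℓ' (by
    have e1 : idx ℓ.castSucc = a := by simp [idx]
    have e2 : idx ℓ.succ = b := by simp [idx]
    rw [e1, e2]; exact hv) (by
    have e1 : idx ℓ'.castSucc = a' := by
      simp only [idx, Fin.val_castSucc]
      rw [if_neg (by omega), if_neg (by omega)]; simp
    have e2 : idx ℓ'.succ = b' := by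
      simp only [idx, Fin.val_succ]
      rw [if_neg (by omega), if_neg (by omega), if_neg (by omega)]
    rw [e1, e2]; exact hv')
  rw [this] at hcon
  omega

/-! ### Part 4: counting partitions -/

lemma count_blocks {ι : Type*} (J : Finset ι) (B : ι → Finset ℕ) (P : ι → Finset ℕ → Prop)
    [∀ j, DecidablePred (P j)] (hB : ∀ j ∈ J, ∀ j' ∈ J, j ≠ j' → Disjoint (B j) (B j'))
    (hP : ∀ j ∈ J, 2 * ((B j).powerset.filter (P j)).card ≤ 2 ^ (B j).card) :
    ∀ X : Finset ℕ, (∀ j ∈ J, B j ⊆ X) →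
    2 ^ J.card * (X.powerset.filter fun A => ∀ j ∈ J, P j (A ∩ B j)).card ≤ 2 ^ X.card := by
  classical
  induction J using Finset.induction_on with
  | empty =>
    intro X _
    simp
  | insert i J hi ih =>
    intro X hX
    have ih' := ih (fun j hj j' hj' => hB j (Finset.mem_insert_of_mem hj) j'
        (Finset.mem_insert_of_mem hj')) (fun j hj => hP j (Finset.mem_insert_of_mem hj))
      (X \ B i) (by
        intro j hj x hx
        rw [Finset.mem_sdiff]
        refine ⟨hX j (Finset.mem_insert_of_mem hj) hx, fun h => ?_⟩
        have := hB j (Finset.mem_insert_of_mem hj) i (Finset.mem_insert_self _ _)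
          (fun h => hi (h ▸ hj))
        exact Finset.disjoint_left.1 this hx h)
    have hPi := hP i (Finset.mem_insert_self _ _)
    have hBi := hX i (Finset.mem_insert_self _ _)
    have hle : (X.powerset.filter fun A => ∀ j ∈ insert i J, P j (A ∩ B j)).card ≤
        ((B i).powerset.filter (P i)).card *
        ((X \ B i).powerset.filter fun A => ∀ j ∈ J, P j (A ∩ B j)).card := by
      rw [← Finset.card_product]
      apply Finset.card_le_card_of_injOn (fun A => (A ∩ B i, A \ B i))
      · intro A hA
        simp only [Finset.coe_filter, Finset.mem_powerset, Set.mem_ofPred_eq] at hA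
        simp only [Finset.coe_product, Set.mem_prod, Finset.coe_filter, Finset.mem_powerset,
          Set.mem_ofPred_eq]
        refine ⟨⟨Finset.inter_subset_right, hA.2 i (Finset.mem_insert_self _ _)⟩,
          Finset.sdiff_subset_sdiff hA.1 le_rfl, fun j hj => ?_⟩
        have h1 := hA.2 j (Finset.mem_insert_of_mem hj)
        have h2 := hB j (Finset.mem_insert_of_mem hj) i (Finset.mem_insert_self _ _)
          (fun h => hi (h ▸ hj))
        have : (A \ B i) ∩ B j = A ∩ B j := by
          ext x
          have hdx : x ∈ B j → x ∉ B i := fun hx => Finset.disjoint_left.1 h2 hx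
          simp only [Finset.mem_inter, Finset.mem_sdiff]
          tauto
        rw [this]; exact h1
      · intro A _ A' _ h
        simp only [Prod.mk.injEq] at h
        rw [← Finset.sdiff_union_inter A (B i), ← Finset.sdiff_union_inter A' (B i), h.1, h.2]
    have hcard : X.card = (B i).card + (X \ B i).card := by
      have := Finset.card_sdiff_add_card_eq_card hBi
      omega
    rw [Finset.card_insert_of_notMem hi, hcard, pow_succ]
    calc 2 ^ J.card * 2 * (X.powerset.filter fun A => ∀ j ∈ insert i J, P j (A ∩ B j)).card
        ≤ 2 ^ J.card * 2 * (((B i).powerset.filter (P i)).card *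
        ((X \ B i).powerset.filter fun A => ∀ j ∈ J, P j (A ∩ B j)).card) :=
          Nat.mul_le_mul_left _ hle
      _ = (2 * ((B i).powerset.filter (P i)).card) * (2 ^ J.card *
          ((X \ B i).powerset.filter fun A => ∀ j ∈ J, P j (A ∩ B j)).card) := by ring
      _ ≤ 2 ^ (B i).card * 2 ^ (X \ B i).card := Nat.mul_le_mul hPi ih'
      _ = _ := (pow_add _ _ _).symm

lemma centralBinom_sq (n : ℕ) : n.centralBinom ^ 2 * (2 * n + 1) ≤ 16 ^ n := by
  induction n with
  | zero => simp
  | succ n ih =>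
    have h := Nat.succ_mul_centralBinom_succ n
    have h2 : (n + 1) ^ 2 * ((n + 1).centralBinom ^ 2 * (2 * (n + 1) + 1)) ≤
        (n + 1) ^ 2 * 16 ^ (n + 1) := by
      calc (n + 1) ^ 2 * ((n + 1).centralBinom ^ 2 * (2 * (n + 1) + 1))
          = ((n + 1) * (n + 1).centralBinom) ^ 2 * (2 * (n + 1) + 1) := by ring
        _ = (n.centralBinom ^ 2 * (2 * n + 1)) * (4 * ((2 * n + 1) * (2 * n + 3))) := by
            rw [h]; ring
        _ ≤ 16 ^ n * (4 * (4 * (n + 1) ^ 2)) := by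
            apply Nat.mul_le_mul ih
            nlinarith
        _ = _ := by ring
    exact Nat.le_of_mul_le_mul_left h2 (by positivity)

lemma near_balanced_count (k : ℕ) (B : Finset ℕ) (hB : B.card = 16 * k ^ 2) :
    2 * (B.powerset.filter fun S => 8 * k ^ 2 < S.card + k ∧ S.card < 8 * k ^ 2 + k).card
      ≤ 2 ^ B.card := by
  classical
  set h := 8 * k ^ 2 with hh
  have hB' : B.card = 2 * h := by rw [hB]; ring
  have h1 : (B.powerset.filter fun S => h < S.card + k ∧ S.card < h + k).card ≤
      2 * k * h.centralBinom := by
    calc (B.powerset.filter fun S => h < S.card + k ∧ S.card < h + k).card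
        ≤ ((Finset.Ico (h + 1 - k) (h + k)).biUnion fun d => B.powersetCard d).card := by
          apply Finset.card_le_card
          intro S hS
          simp only [Finset.mem_filter, Finset.mem_powerset] at hS
          simp only [Finset.mem_biUnion, Finset.mem_Ico, Finset.mem_powersetCard]
          exact ⟨S.card, by omega, hS.1, rfl⟩
      _ ≤ ∑ d ∈ Finset.Ico (h + 1 - k) (h + k), (B.powersetCard d).card := Finset.card_biUnion_le
      _ ≤ ∑ d ∈ Finset.Ico (h + 1 - k) (h + k), h.centralBinom := by
          apply Finset.sum_le_sum
          intro d _
          rw [Finset.card_powersetCard, hB']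
          exact Nat.choose_le_centralBinom d h
      _ = (h + k - (h + 1 - k)) * h.centralBinom := by simp
      _ ≤ 2 * k * h.centralBinom := Nat.mul_le_mul_right _ (by omega)
  have h2 : 4 * k * h.centralBinom ≤ 4 ^ h := by
    refine (pow_le_pow_iff_left₀ (Nat.zero_le _) (Nat.zero_le _) two_ne_zero).1 ?_
    calc (4 * k * h.centralBinom) ^ 2 = h.centralBinom ^ 2 * (16 * k ^ 2) := by ring
      _ ≤ h.centralBinom ^ 2 * (2 * h + 1) := Nat.mul_le_mul_left _ (by omega)
      _ ≤ 16 ^ h := centralBinom_sq h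
      _ = (4 ^ h) ^ 2 := by
          rw [show (16 : ℕ) = 4 ^ 2 by norm_num, ← pow_mul, ← pow_mul, mul_comm]
  rw [hB', pow_mul]
  norm_num
  calc _ ≤ 2 * (2 * k * h.centralBinom) := Nat.mul_le_mul_left _ h1
    _ = 4 * k * h.centralBinom := by ring
    _ ≤ _ := h2

/-! ### Part 5: the main argument -/

lemma core_bound (F : Type) [Field F] (n k : ℕ) (hk : 1 ≤ k) (hkn : k * (16 * k ^ 2) < 2 * n) (r : ℕ)
    (m : ℕ) (sw : Fin m → ℕ) (hsw : ∀ i, 0 < sw i) (s : ℕ) (hs : ∀ i, sw i ≤ s)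
    (π : Fin m → Fin r → ℕ → ℕ)
    (M : (i : Fin m) → Fin (r * (2 * n)) →
      Matrix (Fin (sw i)) (Fin (sw i)) (MvPolynomial ℕ (Gf F)))
    (hM : ∀ i, IsRPass (2 * n) (sw i) r (π i) (M i))
    (heq : razPoly F (2 * n) = ∑ i : Fin m, mprodVal (hsw i) (M i))
    (h1 : m * (2 * n) < 2 ^ k) (h2 : m * (s * s) < 4 ^ k) : False := by
  classical
  have hn : 0 < n := by omega
  choose B hBd hB using fun i => exists_blocks (2 * n) (r * (2 * n)) (sw i) (hsw i) (M i)
    (hM i).one (hM i).two (16 * k ^ 2)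
  set X := Finset.Icc 1 (2 * n) with hX
  have hXc : X.card = 2 * n := by simp [hX]
  have hlt : ∀ j < k, (j + 1) * (16 * k ^ 2) < 2 * n := fun j hj =>
    lt_of_le_of_lt (Nat.mul_le_mul_right _ hj) hkn
  let P : Finset ℕ → Prop := fun S => 8 * k ^ 2 < S.card + k ∧ S.card < 8 * k ^ 2 + k
  let Bad : Fin m → Finset (Finset ℕ) := fun i =>
    X.powerset.filter fun A => ∀ j ∈ Finset.range k, P (A ∩ B i j)
  have hBad : ∀ i, 2 ^ k * (Bad i).card ≤ 4 ^ n := by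
    intro i
    have := count_blocks (Finset.range k) (B i) (fun _ => P) (fun j _ j' _ h => hBd i j j' h)
      (fun j hj => near_balanced_count k (B i j) (hB i j (hlt j (Finset.mem_range.1 hj))).2.1)
      X (fun j hj => (hB i j (hlt j (Finset.mem_range.1 hj))).1)
    rw [Finset.card_range, hXc, pow_mul] at this
    exact this
  -- a good balanced partition
  obtain ⟨A, hAX, hAc, hAg⟩ : ∃ A ⊆ X, A.card = n ∧ ∀ i, A ∉ Bad i := by
    by_contra hcon
    push Not at hcon
    have hsub : X.powersetCard n ⊆ Finset.univ.biUnion Bad := by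
      intro A hA
      rw [Finset.mem_powersetCard] at hA
      obtain ⟨i, hi⟩ := hcon A hA.1 hA.2
      exact Finset.mem_biUnion.2 ⟨i, Finset.mem_univ _, hi⟩
    have hc := (Finset.card_le_card hsub).trans Finset.card_biUnion_le
    rw [Finset.card_powersetCard, hXc] at hc
    have hcb := Nat.four_pow_le_two_mul_self_mul_centralBinom n hn
    have hpos := Nat.centralBinom_pos n
    have h3 : 2 ^ k * n.centralBinom ≤ (m * (2 * n)) * n.centralBinom := by
      calc 2 ^ k * n.centralBinom ≤ 2 ^ k * ∑ i, (Bad i).card := Nat.mul_le_mul_left _ hc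
        _ = ∑ i, 2 ^ k * (Bad i).card := Finset.mul_sum _ _ _
        _ ≤ ∑ i : Fin m, 4 ^ n := Finset.sum_le_sum fun i _ => hBad i
        _ = m * 4 ^ n := by simp
        _ ≤ m * (2 * n * n.centralBinom) := Nat.mul_le_mul_left _ hcb
        _ = _ := by ring
    have := Nat.le_of_mul_le_mul_right h3 hpos
    omega
  have h2k : 2 * k ≤ n := by nlinarith [Nat.mul_le_mul hk hk]
  have hcc : (X \ A).card = n := by
    have := Finset.card_sdiff_add_card_eq_card hAX
    omega
  have hLR : ∀ i, LR A (X \ A) (fun S => ev S (mprodVal (hsw i) (M i)))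
      (s * s * 2 ^ (n - 2 * k)) := by
    intro i
    have hg := hAg i
    simp only [Bad, Finset.mem_filter, Finset.mem_powerset, not_and, not_forall] at hg
    obtain ⟨j, hj, hP⟩ := hg hAX
    obtain ⟨hBX, hBc, Q, H, hdec⟩ := hB i j (hlt j (Finset.mem_range.1 hj))
    have i1 : (A ∩ B i j).card + ((X \ A) ∩ B i j).card = 16 * k ^ 2 := by
      rw [← hBc, ← Finset.card_union_of_disjoint]
      · congr 1
        ext x
        have := @hBX x
        simp only [Finset.mem_union, Finset.mem_inter, Finset.mem_sdiff]
        tauto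
      · rw [Finset.disjoint_left]
        intro x
        simp only [Finset.mem_inter, Finset.mem_sdiff]
        tauto
    have i2 := Finset.card_sdiff_add_card_inter A (B i j)
    have i3 := Finset.card_sdiff_add_card_inter (X \ A) (B i j)
    have mono : ∀ e, e ≤ n - 2 * k → sw i * sw i * 2 ^ e ≤ s * s * 2 ^ (n - 2 * k) := by
      intro e he
      exact Nat.mul_le_mul (Nat.mul_le_mul (hs i) (hs i)) (Nat.pow_le_pow_right (by omega) he)
    have weaken : ∀ {U V : Finset ℕ} {h : Finset ℕ → Gf F} {R R' : ℕ}, LR U V h R → R ≤ R' →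
        LR U V h R' := by
      rintro U V h R R' ⟨I, hI, α, β, hc, hh⟩ hle
      exact ⟨I, hI, α, β, hc.trans hle, hh⟩
    simp only [P] at hP
    by_cases hcase : (A ∩ B i j).card + k ≤ 8 * k ^ 2
    · have hl := LR.of_block X A (B i j) hAX _ Q H hdec
      rw [← pow_add] at hl
      exact weaken hl (mono _ (by omega))
    · have hl := LR.of_block X (X \ A) (B i j) Finset.sdiff_subset _ Q H hdec
      rw [← pow_add, Finset.sdiff_sdiff_eq_self hAX] at hl
      exact weaken hl.symm (mono _ (by omega))
  have hsum := LR.sum hLR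
  have hNS := NS_razPoly F n A hAX hAc
  have e : (fun S => ev S (razPoly F (2 * n))) =
      fun S => ∑ i, ev S (mprodVal (hsw i) (M i)) := by
    funext S; rw [heq, map_sum]
  rw [e] at hNS
  have hfin := hNS.le_of_LR hsum
  rw [hAc] at hfin
  have h4 : 2 ^ n = 4 ^ k * 2 ^ (n - 2 * k) := by
    rw [show (4 : ℕ) = 2 ^ 2 by norm_num, ← pow_mul, ← pow_add]; congr 1; omega
  rw [h4, ← mul_assoc] at hfin
  have := Nat.le_of_mul_le_mul_right hfin (by positivity)
  omega

lemma exists_threshold : ∃ n₀ : ℕ, ∀ n : ℕ, n₀ ≤ n →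
    (2 : ℝ) ^ ((1 / 4 : ℝ) * (n + 1)) * ((n : ℝ) + 1) ^ 5 ≤ 2 ^ n := by
  have h := isLittleO_pow_const_const_pow_of_one_lt (R := ℝ) 10 (r := 2) (by norm_num)
  have h2 := h.bound (c := 1 / 4) (by norm_num)
  rw [Filter.eventually_atTop] at h2
  obtain ⟨n₀, hn⟩ := h2
  refine ⟨n₀ + 1, fun n hle => ?_⟩
  have h3 := hn (n + 1) (by omega)
  simp only [norm_pow, Real.norm_eq_abs] at h3
  rw [abs_of_nonneg (by positivity), abs_of_nonneg (by norm_num)] at h3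
  push_cast at h3
  have hp : ((2 : ℝ) ^ ((1 / 4 : ℝ) * (n + 1))) ^ 2 ≤ 2 ^ (n + 1) := by
    rw [← Real.rpow_natCast, ← Real.rpow_mul (by norm_num), ← Real.rpow_natCast]
    apply Real.rpow_le_rpow_of_exponent_le (by norm_num)
    push_cast
    nlinarith [Nat.cast_nonneg (α := ℝ) n]
  refine (pow_le_pow_iff_left₀ (by positivity) (by positivity) two_ne_zero).1 ?_
  calc ((2 : ℝ) ^ ((1 / 4 : ℝ) * (n + 1)) * ((n : ℝ) + 1) ^ 5) ^ 2
      = ((2 : ℝ) ^ ((1 / 4 : ℝ) * (n + 1))) ^ 2 * ((n : ℝ) + 1) ^ 10 := by ring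
    _ ≤ 2 ^ (n + 1) * (1 / 4 * 2 ^ (n + 1)) := by gcongr
    _ = (2 ^ n) ^ 2 := by ring
/-- Theorem (sum of r-pass smABPs lower bound). -/
theorem sum_of_rpass_lower_bound :
    ∃ c₁ c₂ : ℝ, 0 < c₁ ∧ 0 < c₂ ∧ ∃ N₀ : ℕ, ∀ (F : Type) [Field F] (N : ℕ),
      N₀ ≤ N → Even N → ∀ (r : ℕ), 1 ≤ r →
      ∀ (m : ℕ) (sw : Fin m → ℕ) (hsw : ∀ i, 2 ≤ sw i)
        (π : Fin m → Fin r → ℕ → ℕ)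
        (M : (i : Fin m) → Fin (r * N) →
          Matrix (Fin (sw i)) (Fin (sw i)) (MvPolynomial ℕ (Gf F))),
        (∀ i, IsRPass N (sw i) r (π i) (M i)) →
        razPoly F N = ∑ i : Fin m, mprodVal (show 0 < sw i by have := hsw i; omega) (M i) →
        (2 : ℝ) ^ (c₁ * (N : ℝ) ^ ((1 : ℝ) / 5)) /
            ((Finset.univ.sup sw : ℕ) : ℝ) ^ (c₂ * ((r : ℝ) + Real.logb 2 N)) ≤ (m : ℝ) := by
  obtain ⟨n₀, hn₀⟩ := exists_threshold
  refine ⟨1 / 4, 2, by norm_num, by norm_num, (n₀ + 6) ^ 5, ?_⟩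
  intro F _ N hN hev r hr m sw hsw π M hM heq
  obtain ⟨n, rfl⟩ : ∃ n, N = 2 * n := by
    obtain ⟨n, hn⟩ := hev; exact ⟨n, by omega⟩
  by_contra hcon
  push Not at hcon
  set s := Finset.univ.sup sw with hs
  have hsle : ∀ i, sw i ≤ s := fun i => Finset.le_sup (Finset.mem_univ i)
  set x : ℝ := ((2 * n : ℕ) : ℝ) ^ ((1 : ℝ) / 5) with hx
  have hx0 : 0 ≤ x := by positivity
  have hx5 : x ^ 5 = ((2 * n : ℕ) : ℝ) := by
    rw [hx, ← Real.rpow_natCast, ← Real.rpow_mul (by positivity)]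
    norm_num
  have hxge : ((n₀ + 6 : ℕ) : ℝ) ≤ x := by
    refine (pow_le_pow_iff_left₀ (by positivity) hx0 (n := 5) (by norm_num)).1 ?_
    rw [hx5]
    exact_mod_cast hN
  set k := ⌊x⌋₊ with hk
  have hkx : (k : ℝ) ≤ x := Nat.floor_le hx0
  have hxk : x < k + 1 := Nat.lt_floor_add_one x
  have hkge : n₀ + 6 ≤ k := Nat.le_floor hxge
  have hk5 : k ^ 5 ≤ 2 * n := by
    have : (k : ℝ) ^ 5 ≤ ((2 * n : ℕ) : ℝ) := by
      rw [← hx5]; gcongr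
    exact_mod_cast this
  have hN5 : ((2 * n : ℕ) : ℝ) ≤ ((k : ℝ) + 1) ^ 5 := by
    rw [← hx5]; gcongr
  have hN1 : 1 ≤ 2 * n := le_trans (Nat.one_le_pow _ _ (by omega)) hN
  have hkn : k * (16 * k ^ 2) < 2 * n := by
    refine lt_of_lt_of_le ?_ hk5
    have h36 : 36 ≤ k ^ 2 := by nlinarith
    have : 0 < k ^ 3 := Nat.pow_pos (by omega)
    nlinarith
  -- the key real inequality
  have key : (m : ℝ) * ((s : ℝ) * s) < (2 : ℝ) ^ ((1 / 4 : ℝ) * (k + 1)) := by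
    rcases Nat.eq_zero_or_pos m with rfl | hm
    · simp only [Nat.cast_zero, zero_mul]; positivity
    · have hs2 : 2 ≤ s := (hsw ⟨0, hm⟩).trans (hsle _)
      have hs2' : (2 : ℝ) ≤ (s : ℝ) := by exact_mod_cast hs2
      have hD : (s : ℝ) * s ≤ (s : ℝ) ^ (2 * ((r : ℝ) + Real.logb 2 ((2 * n : ℕ) : ℝ))) := by
        have hlog : 0 ≤ Real.logb 2 ((2 * n : ℕ) : ℝ) :=
          Real.logb_nonneg (by norm_num) (by exact_mod_cast hN1)
        have hr' : (1 : ℝ) ≤ r := by exact_mod_cast hr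
        calc (s : ℝ) * s = (s : ℝ) ^ (2 : ℝ) := by
              rw [Real.rpow_two]; ring
          _ ≤ _ := Real.rpow_le_rpow_of_exponent_le (by linarith) (by linarith)
      have hDpos : 0 < (s : ℝ) ^ (2 * ((r : ℝ) + Real.logb 2 ((2 * n : ℕ) : ℝ))) := by positivity
      rw [lt_div_iff₀ hDpos] at hcon
      calc (m : ℝ) * ((s : ℝ) * s) ≤ _ := mul_le_mul_of_nonneg_left hD (by positivity)
        _ < _ := hcon
        _ ≤ _ := Real.rpow_le_rpow_of_exponent_le (by norm_num) (by linarith)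
  have hth := hn₀ k (by omega)
  have h1 : m * (2 * n) < 2 ^ k := by
    have : (m : ℝ) * ((2 * n : ℕ) : ℝ) < 2 ^ k := by
      rcases Nat.eq_zero_or_pos m with rfl | hm
      · simp
      · have hs2 : 2 ≤ s := (hsw ⟨0, hm⟩).trans (hsle _)
        have hs2' : (2 : ℝ) ≤ (s : ℝ) := by exact_mod_cast hs2
        have hm1 : (m : ℝ) < (2 : ℝ) ^ ((1 / 4 : ℝ) * (k + 1)) := by
          refine lt_of_le_of_lt ?_ key
          exact le_mul_of_one_le_right (by positivity) (by nlinarith)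
        calc (m : ℝ) * ((2 * n : ℕ) : ℝ) ≤ m * ((k : ℝ) + 1) ^ 5 := by gcongr
          _ < (2 : ℝ) ^ ((1 / 4 : ℝ) * (k + 1)) * ((k : ℝ) + 1) ^ 5 := by gcongr
          _ ≤ _ := hth
    exact_mod_cast this
  have h2 : m * (s * s) < 4 ^ k := by
    have : (m : ℝ) * ((s : ℝ) * s) < 4 ^ k := by
      refine lt_of_lt_of_le key ?_
      have h3 : (2 : ℝ) ^ ((1 / 4 : ℝ) * (k + 1)) ≤ (2 : ℝ) ^ (k : ℝ) := by
        apply Real.rpow_le_rpow_of_exponent_le (by norm_num)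
        have : (6 : ℝ) ≤ k := by exact_mod_cast (show 6 ≤ k by omega)
        linarith
      rw [Real.rpow_natCast] at h3
      refine h3.trans ?_
      gcongr
      norm_num
    exact_mod_cast this
  exact core_bound F n k (by omega) hkn r m sw (fun i => by have := hsw i; omega) s hsle π M hM heq
    h1 h2

end
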